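/- (Surrogate approximation lemma from the proof of Theorem 7) Let β ≥ 0 be a real and k ∈ ℕ. Suppose S_β ⊆ V with |S_β| ≤ k satisfies Σ_{y ⊆ E} w(y)·min(β, f(S_β, y, A)) ≥ (1 − 1/e) · Σ_{y ⊆ E} w(y)·min(β, f(S', y, A)) for every S' ⊆ V with |S'| ≤ k. Then for every S' ⊆ V with |S'| ≤ k: Σ_{y ⊆ E} w(y)·min(β, m_C(S', y)) ≤ (1 + 2e/(e − 1)) · Σ_{y ⊆ E} w(y)·min(β, m_C(S_β, y)). -/

import Mathlib

/-!
Write `F S = Σ_y w(y) min(β, f(S, y, A))` and `M S = Σ_y w(y) min(β, m_C(S, y))`. In each scenario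
`f(S, y, A) ≤ m_C(S, y) ≤ 2 f(S, y, A)`: every term of the minimum in `m_C` is nonnegative, since
`|B_c|` is at most the maximal size (`reachCount_le_mC`), and the term of a candidate attaining that
maximal size is `f(S, y, A ∩ B_c) ≤ f(S, y, A)` (`mC_le_two_mul`). As `β ≥ 0`, truncation preserves
both bounds, so `F ≤ M ≤ 2 F`. With the hypothesis on `S_β` this gives
`M S' ≤ 2 F S' ≤ 2e/(e-1) F S_β ≤ 2e/(e-1) M S_β`, and `M S_β ≥ 0` leaves room for the extra `1`.
-/

open Finset

attribute [local instance] Classical.propDecidable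

/-- Number of nodes of `A` reachable from seed set `S` in scenario `y`. -/
noncomputable def reachCount {V : Type*} (y : Finset (V × V)) (S A : Finset V) : ℕ :=
  (A.filter (fun v => ∃ s ∈ S, Relation.ReflTransGen (fun a b => (a, b) ∈ y) s v)).card

/-- Probability of the live-graph scenario `y ⊆ E` under edge probabilities `p`. -/
noncomputable def sceneWeight {V : Type*} (E : Finset (V × V)) (p : V × V → ℝ)
    (y : Finset (V × V)) : ℝ :=
  (∏ e ∈ y, p e) * (∏ e ∈ E \ y, (1 - p e))

/-- Voters whose second choice is `c`. -/
noncomputable def secondFor {V C : Type*} [Fintype V] (π₂ : V → C) (c : C) : Finset V :=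
  Finset.univ.filter (fun v => π₂ v = c)

/-- Voters whose first choice is `c`. -/
noncomputable def firstFor {V C : Type*} [Fintype V] (π₁ : V → C) (c : C) : Finset V :=
  Finset.univ.filter (fun v => π₁ v = c)

/-- Constructive change in margin in scenario `y` under seed set `S`:
`m_C(S, y) = f(S, y, A) + min_{c ∈ J} ( f(S, y, A ∩ B_c) + max_{c' ∈ J} |B_{c'}| − |B_c| )`,
where `A = {v : π₂ v = c*}` and `B_c = {v : π₁ v = c}`. -/
noncomputable def mC {V C : Type*} [Fintype V] (J : Finset C) (hJ : J.Nonempty)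
    (π₁ π₂ : V → C) (cstar : C) (S : Finset V) (y : Finset (V × V)) : ℝ :=
  (reachCount y S (secondFor π₂ cstar) : ℝ) +
    J.inf' hJ (fun c =>
      (reachCount y S (secondFor π₂ cstar ∩ firstFor π₁ c) : ℝ) +
        J.sup' hJ (fun c' => ((firstFor π₁ c').card : ℝ)) - ((firstFor π₁ c).card : ℝ))

theorem sceneWeight_nonneg {V : Type*} {E : Finset (V × V)} {p : V × V → ℝ}
    (hp : ∀ e ∈ E, 0 ≤ p e ∧ p e ≤ 1) {y : Finset (V × V)} (hy : y ⊆ E) :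
    0 ≤ sceneWeight E p y := by
  refine mul_nonneg (prod_nonneg fun e he => (hp e (hy he)).1) (prod_nonneg fun e he => ?_)
  linarith [(hp e (mem_sdiff.1 he).1).2]

theorem reachCount_mono {V : Type*} (y : Finset (V × V)) (S : Finset V) {A B : Finset V}
    (h : A ⊆ B) : reachCount y S A ≤ reachCount y S B :=
  card_le_card (filter_subset_filter _ h)

theorem reachCount_le_mC {V C : Type*} [Fintype V] (J : Finset C) (hJ : J.Nonempty)
    (π₁ π₂ : V → C) (cstar : C) (S : Finset V) (y : Finset (V × V)) :
    (reachCount y S (secondFor π₂ cstar) : ℝ) ≤ mC J hJ π₁ π₂ cstar S y := by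
  unfold mC
  refine le_add_of_nonneg_right ((le_inf'_iff _ _).2 fun c hc => ?_)
  have h1 := le_sup' (fun c' => ((firstFor π₁ c').card : ℝ)) hc
  have h2 : (0 : ℝ) ≤ (reachCount y S (secondFor π₂ cstar ∩ firstFor π₁ c) : ℝ) :=
    Nat.cast_nonneg _
  linarith

theorem mC_le_two_mul {V C : Type*} [Fintype V] (J : Finset C) (hJ : J.Nonempty)
    (π₁ π₂ : V → C) (cstar : C) (S : Finset V) (y : Finset (V × V)) :
    mC J hJ π₁ π₂ cstar S y ≤ 2 * (reachCount y S (secondFor π₂ cstar) : ℝ) := by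
  -- `c` is a candidate with the most first-choice votes, so its term has no additive offset.
  obtain ⟨c, hc, hmax⟩ := exists_mem_eq_sup' hJ (fun c' => ((firstFor π₁ c').card : ℝ))
  have h1 := inf'_le (fun c =>
      (reachCount y S (secondFor π₂ cstar ∩ firstFor π₁ c) : ℝ) +
        J.sup' hJ (fun c' => ((firstFor π₁ c').card : ℝ)) - ((firstFor π₁ c).card : ℝ)) hc
  have h2 : (reachCount y S (secondFor π₂ cstar ∩ firstFor π₁ c) : ℝ) ≤
      (reachCount y S (secondFor π₂ cstar) : ℝ) :=
    Nat.cast_le.2 (reachCount_mono y S inter_subset_left)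
  unfold mC
  linarith

/-- surrogate approximation lemma from the proof of Theorem 7: if `S_β`
(of size at most `k`) is a `(1 − 1/e)`-approximate maximizer of the truncated surrogate
`Σ_{y ⊆ E} w(y)·min(β, f(S, y, A))` with `A = {v : π₂ v = c*}` and `β ≥ 0`, then for
every `S'` of size at most `k`,
`Σ_y w(y)·min(β, m_C(S', y)) ≤ (1 + 2e/(e − 1)) · Σ_y w(y)·min(β, m_C(S_β, y))`. -/
theorem mC_surrogate_approx {V C : Type*} [Fintype V]
    (E : Finset (V × V)) (p : V × V → ℝ) (hp : ∀ e ∈ E, 0 ≤ p e ∧ p e ≤ 1)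
    (J : Finset C) (hJ : J.Nonempty) (π₁ π₂ : V → C) (cstar : C)
    (hdist : ∀ v, π₁ v ≠ π₂ v)
    (β : ℝ) (hβ : 0 ≤ β) (k : ℕ)
    (Sβ : Finset V) (hSβ : Sβ.card ≤ k)
    (hgreedy : ∀ S' : Finset V, S'.card ≤ k →
      (1 - 1 / Real.exp 1) *
          ∑ y ∈ E.powerset, sceneWeight E p y * min β (reachCount y S' (secondFor π₂ cstar) : ℝ) ≤
        ∑ y ∈ E.powerset, sceneWeight E p y * min β (reachCount y Sβ (secondFor π₂ cstar) : ℝ)) :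
    ∀ S' : Finset V, S'.card ≤ k →
      ∑ y ∈ E.powerset, sceneWeight E p y * min β (mC J hJ π₁ π₂ cstar S' y) ≤
        (1 + 2 * Real.exp 1 / (Real.exp 1 - 1)) *
          ∑ y ∈ E.powerset, sceneWeight E p y * min β (mC J hJ π₁ π₂ cstar Sβ y) := by
  intro S' hS'
  have hlow : ∑ y ∈ E.powerset,
        sceneWeight E p y * min β (reachCount y Sβ (secondFor π₂ cstar) : ℝ) ≤
      ∑ y ∈ E.powerset, sceneWeight E p y * min β (mC J hJ π₁ π₂ cstar Sβ y) :=
    sum_le_sum fun y hy => mul_le_mul_of_nonneg_left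
      (min_le_min_left _ (reachCount_le_mC J hJ π₁ π₂ cstar Sβ y))
      (sceneWeight_nonneg hp (mem_powerset.1 hy))
  have hnonneg : 0 ≤ ∑ y ∈ E.powerset,
      sceneWeight E p y * min β (reachCount y Sβ (secondFor π₂ cstar) : ℝ) :=
    sum_nonneg fun y hy => mul_nonneg (sceneWeight_nonneg hp (mem_powerset.1 hy))
      (le_min hβ (Nat.cast_nonneg _))
  have hup : ∑ y ∈ E.powerset, sceneWeight E p y * min β (mC J hJ π₁ π₂ cstar S' y) ≤
      2 * ∑ y ∈ E.powerset,
        sceneWeight E p y * min β (reachCount y S' (secondFor π₂ cstar) : ℝ) := by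
    rw [mul_sum]
    refine sum_le_sum fun y hy => ?_
    rw [mul_left_comm]
    refine mul_le_mul_of_nonneg_left ?_ (sceneWeight_nonneg hp (mem_powerset.1 hy))
    rw [mul_min_of_nonneg _ _ zero_le_two]
    exact min_le_min (by linarith) (mC_le_two_mul J hJ π₁ π₂ cstar S' y)
  have hg := hgreedy S' hS'
  have he : (0 : ℝ) < Real.exp 1 - 1 := by linarith [Real.add_one_lt_exp one_ne_zero]
  have he0 := Real.exp_pos 1
  generalize (∑ y ∈ E.powerset,
    sceneWeight E p y * min β (reachCount y S' (secondFor π₂ cstar) : ℝ)) = F' at hup hg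
  -- `2e/(e-1)` is twice the inverse of the greedy factor `1 - 1/e`.
  have hinv : 2 * F' =
      2 * Real.exp 1 / (Real.exp 1 - 1) * ((1 - 1 / Real.exp 1) * F') := by
    field_simp
  have hc : 0 ≤ 2 * Real.exp 1 / (Real.exp 1 - 1) := by positivity
  have hchain := mul_le_mul_of_nonneg_left (hg.trans hlow) hc
  linarith
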